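/- Let C be a cosemisimple coalgebra over a field k, i.e. C is the internal direct sum of a family of subcoalgebras each of which is cosimple. Then every finite-dimensional right C-comodule V is an internal direct sum V = V_1 ⊕ … ⊕ V_n of finitely many irreducible subcomodules. -/

import Mathlib

open scoped TensorProduct
open TensorProduct LinearMap

/-!
The convolution algebra `C*` acts on every right `C`-comodule by `f • v = (id ⊗ f) (β v)`, and the
subcomodules are exactly the `C*`-submodules. Each element of a comodule generates a
finite-dimensional submodule, so every nonzero `C*`-submodule contains a simple one. The socle `S`
of the `C*`-module `C` is stable under all `C*`-linear endomorphisms of `C`, in particular under the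
operators `(ξ ⊗ id) ∘ Δ`; hence `D ⊓ S` is a subcoalgebra for every subcoalgebra `D`. If `D` is
cosimple and nonzero then `D ⊓ S` is nonzero, so that `D ≤ S`. Therefore `C` is a semisimple
`C*`-module, and so is every comodule `V`, because a basis of `V` turns `β : V → V ⊗ C` into an
injective `C*`-linear map from `V` to a direct sum of copies of `C`.
-/

universe v

section Slices

variable {R M N P : Type*} [CommRing R] [AddCommGroup M] [Module R M] [AddCommGroup N] [Module R N]
  [AddCommGroup P] [Module R P]

/-- The slice map `id ⊗ f : M ⊗ N → M` of a functional `f` on the right factor. -/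
noncomputable def rightSlice (f : Module.Dual R N) : M ⊗[R] N →ₗ[R] M :=
  (TensorProduct.rid R M).toLinearMap ∘ₗ f.lTensor M

/-- The slice map `f ⊗ id : M ⊗ N → N` of a functional `f` on the left factor. -/
noncomputable def leftSlice (f : Module.Dual R M) : M ⊗[R] N →ₗ[R] N :=
  (TensorProduct.lid R N).toLinearMap ∘ₗ f.rTensor N

@[simp]
theorem rightSlice_tmul (f : Module.Dual R N) (m : M) (n : N) :
    rightSlice f (m ⊗ₜ[R] n) = f n • m := by
  simp [rightSlice]

@[simp]
theorem leftSlice_tmul (f : Module.Dual R M) (m : M) (n : N) :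
    leftSlice f (m ⊗ₜ[R] n) = f m • n := by
  simp [leftSlice]

theorem rightSlice_rTensor (f : Module.Dual R N) (g : M →ₗ[R] P) (t : M ⊗[R] N) :
    rightSlice f (g.rTensor N t) = g (rightSlice f t) := by
  induction t with
  | zero => simp only [map_zero]
  | tmul m n => simp
  | add x y hx hy => simp only [map_add, hx, hy]

theorem rightSlice_lTensor (f : Module.Dual R P) (g : N →ₗ[R] P) (t : M ⊗[R] N) :
    rightSlice f (g.lTensor M t) = rightSlice (f ∘ₗ g) t := by
  simp only [rightSlice, comp_apply, lTensor_comp]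

theorem leftSlice_lTensor (f : Module.Dual R M) (g : N →ₗ[R] P) (t : M ⊗[R] N) :
    leftSlice f (g.lTensor M t) = g (leftSlice f t) := by
  induction t with
  | zero => simp only [map_zero]
  | tmul m n => simp
  | add x y hx hy => simp only [map_add, hx, hy]

theorem rightSlice_assoc_symm (f : Module.Dual R P) (t : M ⊗[R] (N ⊗[R] P)) :
    rightSlice f ((TensorProduct.assoc R M N P).symm t) = (rightSlice f).lTensor M t := by
  have slice_comp_assoc : rightSlice f ∘ₗ (TensorProduct.assoc R M N P).symm.toLinearMap =
      (rightSlice f).lTensor M := by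
    ext; simp
  exact LinearMap.congr_fun slice_comp_assoc t

theorem forall_rightSlice_eq_zero_iff [Module.Free R N] {t : M ⊗[R] N} :
    (∀ f : Module.Dual R N, rightSlice f t = 0) ↔ t = 0 := by
  refine ⟨fun h ↦ ?_, fun h f ↦ by rw [h, map_zero]⟩
  let b := Module.Free.chooseBasis R N
  apply (equivFinsuppOfBasisRight (M := M) b).injective
  ext i
  rw [equivFinsuppOfBasisRight_apply, map_zero, Finsupp.zero_apply]
  exact h (b.coord i)

theorem forall_leftSlice_eq_zero_iff [Module.Free R M] {t : M ⊗[R] N} :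
    (∀ f : Module.Dual R M, leftSlice f t = 0) ↔ t = 0 := by
  refine ⟨fun h ↦ ?_, fun h f ↦ by rw [h, map_zero]⟩
  let b := Module.Free.chooseBasis R M
  apply (equivFinsuppOfBasisLeft (N := N) b).injective
  ext i
  rw [equivFinsuppOfBasisLeft_apply, map_zero, Finsupp.zero_apply]
  exact h (b.coord i)

theorem mem_range_rTensor_subtype_iff [Module.Free R N] {U : Submodule R M} {t : M ⊗[R] N} :
    t ∈ range (U.subtype.rTensor N) ↔ ∀ f : Module.Dual R N, rightSlice f t ∈ U := by
  rw [← rTensor_mkQ, mem_ker, ← forall_rightSlice_eq_zero_iff]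
  simp only [rightSlice_rTensor, U.mkQ_apply, Submodule.Quotient.mk_eq_zero]

theorem mem_range_lTensor_subtype_iff [Module.Free R M] {U : Submodule R N} {t : M ⊗[R] N} :
    t ∈ range (U.subtype.lTensor M) ↔ ∀ f : Module.Dual R M, leftSlice f t ∈ U := by
  rw [← lTensor_mkQ, mem_ker, ← forall_leftSlice_eq_zero_iff]
  simp only [leftSlice_lTensor, U.mkQ_apply, Submodule.Quotient.mk_eq_zero]

theorem exists_fg_forall_rightSlice_mem (t : M ⊗[R] N) :
    ∃ U : Submodule R M, U.FG ∧ ∀ f : Module.Dual R N, rightSlice f t ∈ U := by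
  induction t with
  | zero => exact ⟨⊥, Submodule.fg_bot, fun f ↦ by simp⟩
  | tmul m n =>
    refine ⟨R ∙ m, Submodule.fg_span_singleton m, fun f ↦ ?_⟩
    rw [rightSlice_tmul]
    exact Submodule.smul_mem _ _ (Submodule.mem_span_singleton_self m)
  | add x y hx hy =>
    obtain ⟨U, hU, hxU⟩ := hx
    obtain ⟨U', hU', hyU'⟩ := hy
    refine ⟨U ⊔ U', hU.sup hU', fun f ↦ ?_⟩
    rw [map_add]
    exact Submodule.add_mem_sup (hxU f) (hyU' f)

theorem range_map_subtype_eq_inf (U : Submodule R M) {U' : Submodule R N} {p : N →ₗ[R] U'}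
    (hp : p ∘ₗ U'.subtype = LinearMap.id) :
    range (TensorProduct.map U.subtype U'.subtype) =
      range (U.subtype.rTensor N) ⊓ range (U'.subtype.lTensor M) := by
  apply le_antisymm
  · rintro _ ⟨s, rfl⟩
    constructor
    · rw [← rTensor_comp_lTensor]
      exact ⟨_, rfl⟩
    · rw [← lTensor_comp_rTensor]
      exact ⟨_, rfl⟩
  · rintro _ ⟨⟨s, rfl⟩, ⟨s', hs'⟩⟩
    refine ⟨p.lTensor U s, ?_⟩
    calc TensorProduct.map U.subtype U'.subtype (p.lTensor U s)
      _ = U'.subtype.lTensor M (p.lTensor M (U.subtype.rTensor N s)) := by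
        rw [← lTensor_comp_rTensor, comp_apply, ← comp_apply (U.subtype.rTensor U'),
          rTensor_comp_lTensor, ← lTensor_comp_rTensor, comp_apply]
      _ = U'.subtype.lTensor M (p.lTensor M (U'.subtype.lTensor M s')) := by rw [hs']
      _ = U.subtype.rTensor N s := by
        rw [← comp_apply (p.lTensor M), ← lTensor_comp, hp, lTensor_id, id_apply, hs']

end Slices

section Socle

variable (R M : Type*) [Ring R] [AddCommGroup M] [Module R M]

/-- The socle of a module: the sum of its simple submodules. -/
def socle : Submodule R M :=
  sSup {N | IsSimpleModule R N}

variable {R M}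

theorem le_socle (N : Submodule R M) [hN : IsSimpleModule R N] : N ≤ socle R M :=
  le_sSup hN

theorem socle_isFullyInvariant : (socle R M).IsFullyInvariant := by
  intro f
  refine sSup_le fun N (hN : IsSimpleModule R N) ↦ ?_
  rcases (f.domRestrict N).injective_or_eq_zero with hinj | hzero
  · have : IsSimpleModule R (range (f.domRestrict N)) :=
      .congr (LinearEquiv.ofInjective _ hinj).symm
    exact fun x hx ↦ le_socle (range (f.domRestrict N)) ⟨⟨x, hx⟩, rfl⟩
  · intro x hx
    have hfx : f x = 0 := LinearMap.congr_fun hzero ⟨x, hx⟩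
    rw [Submodule.mem_comap, hfx]
    exact zero_mem _

theorem eq_bot_of_disjoint_socle [IsAtomic (Submodule R M)] {N : Submodule R M}
    (h : Disjoint N (socle R M)) : N = ⊥ := by
  refine (eq_bot_or_exists_atom_le N).resolve_right ?_
  rintro ⟨A, hA, hAN⟩
  have : IsSimpleModule R A := isSimpleModule_iff_isAtom.2 hA
  exact hA.1 (le_bot_iff.1 (h hAN (le_socle A)))

theorem isSemisimpleModule_iff_socle_eq_top : IsSemisimpleModule R M ↔ socle R M = ⊤ :=
  sSup_simples_eq_top_iff_isSemisimpleModule.symm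

theorem isAtomic_submodule_of_isArtinian_span_singleton
    (h : ∀ x : M, IsArtinian R (Submodule.span R {x})) : IsAtomic (Submodule R M) := by
  refine ⟨fun N ↦ or_iff_not_imp_left.2 fun hN ↦ ?_⟩
  obtain ⟨x, hxN, hx⟩ := N.exists_mem_ne_zero_of_ne_bot hN
  let P := Submodule.span R {x}
  have := h x
  have : IsAtomic (Set.Iic P) := P.mapIic.isAtomic_iff.1 inferInstance
  have hP : (⊤ : Set.Iic P) ≠ ⊥ := fun hbot ↦
    hx (Submodule.span_singleton_eq_bot.1 (congrArg Subtype.val hbot))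
  obtain ⟨A, hA, -⟩ := (eq_bot_or_exists_atom_le (⊤ : Set.Iic P)).resolve_left hP
  exact ⟨A, hA.of_isAtom_coe_Iic, A.2.trans ((Submodule.span_singleton_le_iff_mem x N).2 hxN)⟩

end Socle

section Internal

variable {R M κ : Type*} [Ring R] [AddCommGroup M] [Module R M]

theorem exists_fin_equiv_isInternal [IsNoetherian R M] [DecidableEq κ] {W : κ → Submodule R M}
    (hW : DirectSum.IsInternal W) (hne : ∀ i, W i ≠ ⊥) :
    ∃ (n : ℕ) (e : Fin n ≃ κ), DirectSum.IsInternal fun i ↦ W (e i) := by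
  have : Finite κ := WellFoundedGT.finite_of_iSupIndep hW.submodule_iSupIndep hne
  let e := (Finite.equivFin κ).symm
  refine ⟨Nat.card κ, e, DirectSum.isInternal_submodule_of_iSupIndep_of_iSup_eq_top ?_ ?_⟩
  · exact hW.submodule_iSupIndep.comp e.injective
  · rw [e.iSup_comp, hW.submodule_iSup_eq_top]

end Internal

/-- The algebra of functionals on a coalgebra `C`, with the convolution product
`(f * g) c = ∑ f c₁ * g c₂`. -/
abbrev DualAlgebra (R C : Type*) [CommRing R] [AddCommGroup C] [Module R C] :=
  WithConv (C →ₗ[R] R)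

/-- A right comodule over a coalgebra `C`, with coaction `coact`. -/
class RightComodule (R C V : Type*) [CommRing R] [AddCommGroup C] [Module R C] [Coalgebra R C]
    [AddCommGroup V] [Module R V] where
  coact : V →ₗ[R] V ⊗[R] C
  rid_lTensor_counit_coact (v : V) :
    TensorProduct.rid R V ((Coalgebra.counit (R := R) (A := C)).lTensor V (coact v)) = v
  assoc_rTensor_coact_coact (v : V) :
    TensorProduct.assoc R V C C (coact.rTensor C (coact v)) =
      (Coalgebra.comul (R := R) (A := C)).lTensor V (coact v)

namespace RightComodule

section Action

variable {R C V : Type*} [CommRing R] [AddCommGroup C] [Module R C] [Coalgebra R C]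
  [AddCommGroup V] [Module R V] [RightComodule R C V]

noncomputable instance : RightComodule R C C where
  coact := Coalgebra.comul
  rid_lTensor_counit_coact c := by simp
  assoc_rTensor_coact_coact := Coalgebra.coassoc_apply

noncomputable instance : SMul (DualAlgebra R C) V where
  smul f v := rightSlice f.ofConv (coact v)

theorem smul_def (f : DualAlgebra R C) (v : V) : f • v = rightSlice f.ofConv (coact v) := rfl

theorem mul_apply_eq_apply_smul (f g : DualAlgebra R C) (c : C) : (f * g) c = f (g • c) := by
  change _ = f.ofConv (rightSlice g.ofConv (Coalgebra.comul c))
  rw [convMul_apply]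
  induction Coalgebra.comul (R := R) c with
  | zero => simp only [map_zero]
  | tmul x y => simp [mul_comm]
  | add x y hx hy => simp only [map_add, hx, hy]

/-- `coact` is `C*`-linear when `C*` acts on the right factor of `V ⊗ C` only. -/
theorem coact_smul (f : DualAlgebra R C) (v : V) :
    (coact (f • v) : V ⊗[R] C) =
      (rightSlice f.ofConv ∘ₗ Coalgebra.comul (R := R) (A := C)).lTensor V (coact v) := by
  rw [smul_def, ← rightSlice_rTensor, lTensor_comp, comp_apply, ← assoc_rTensor_coact_coact,
    ← rightSlice_assoc_symm, LinearEquiv.symm_apply_apply]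

noncomputable instance : Module (DualAlgebra R C) V where
  one_smul := rid_lTensor_counit_coact
  mul_smul f g v := by
    have mul_eq_comp : (f * g).ofConv =
        f.ofConv ∘ₗ rightSlice g.ofConv ∘ₗ Coalgebra.comul (R := R) (A := C) :=
      LinearMap.ext fun c ↦ mul_apply_eq_apply_smul f g c
    rw [smul_def f, coact_smul, rightSlice_lTensor, smul_def, mul_eq_comp]
  smul_zero f := by simp only [smul_def, map_zero]
  smul_add f v w := by simp only [smul_def, map_add]
  add_smul f g v := by simp [smul_def, rightSlice, lTensor_add]
  zero_smul v := by simp [smul_def, rightSlice]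

instance : IsScalarTower R (DualAlgebra R C) V where
  smul_assoc r f v := by simp [smul_def, rightSlice, lTensor_smul]

/-- The map `v ↦ (ξ ⊗ id) (coact v)`, whose values are the matrix coefficients of `V`. -/
noncomputable def coefficientMap (ξ : Module.Dual R V) : V →ₗ[DualAlgebra R C] C where
  toFun v := leftSlice ξ (coact v)
  map_add' v w := by simp only [map_add]
  map_smul' f v := by
    rw [coact_smul, leftSlice_lTensor]
    rfl

/-- The coaction in coordinates: a basis of `V` identifies `V ⊗ C` with a sum of copies of `C`. -/
noncomputable def coactCoordinates {ι : Type*} [DecidableEq ι] (b : Module.Basis ι R V) :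
    V →ₗ[DualAlgebra R C] ι →₀ C where
  toFun v := equivFinsuppOfBasisLeft b (coact v)
  map_add' v w := by simp only [map_add]
  map_smul' f v := by
    ext i
    rw [RingHom.id_apply, Finsupp.smul_apply]
    simp only [equivFinsuppOfBasisLeft_apply]
    exact (coefficientMap (b.coord i)).map_smul f v

theorem coact_injective : Function.Injective (coact : V →ₗ[R] V ⊗[R] C) :=
  Function.LeftInverse.injective (g := rightSlice Coalgebra.counit) rid_lTensor_counit_coact

theorem coactCoordinates_injective {ι : Type*} [DecidableEq ι] (b : Module.Basis ι R V) :
    Function.Injective (coactCoordinates b : V →ₗ[DualAlgebra R C] ι →₀ C) :=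
  (equivFinsuppOfBasisLeft b).injective.comp coact_injective

variable (R C) in
theorem isArtinian_span_singleton [IsArtinianRing R] (v : V) :
    IsArtinian (DualAlgebra R C) (Submodule.span (DualAlgebra R C) {v}) := by
  obtain ⟨U, hU, hvU⟩ := exists_fg_forall_rightSlice_mem (coact v : V ⊗[R] C)
  have hle : (Submodule.span (DualAlgebra R C) {v}).restrictScalars R ≤ U := by
    intro w hw
    obtain ⟨f, rfl⟩ := Submodule.mem_span_singleton.1 hw
    exact hvU f.ofConv
  have : IsArtinian R U := isArtinian_of_fg_of_artinian U hU
  have : IsArtinian R (Submodule.span (DualAlgebra R C) {v}) :=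
    isArtinian_of_injective (Submodule.inclusion hle) (Submodule.inclusion_injective hle)
  exact isArtinian_of_tower R this

instance [IsArtinianRing R] : IsAtomic (Submodule (DualAlgebra R C) V) :=
  isAtomic_submodule_of_isArtinian_span_singleton (isArtinian_span_singleton R C)

theorem isSemisimpleModule_of_isSemisimpleModule_self [Module.Free R V]
    [IsSemisimpleModule (DualAlgebra R C) C] : IsSemisimpleModule (DualAlgebra R C) V := by
  classical
  exact .of_injective _ (coactCoordinates_injective (Module.Free.chooseBasis R V))

end Action

section Subcomodule

variable {R C : Type*} {V : Type v} [CommRing R] [AddCommGroup C] [Module R C] [Coalgebra R C]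
  [AddCommGroup V] [Module R V] [RightComodule R C V]

variable (C) in
/-- A subspace `U` with `coact U ⊆ U ⊗ C`. -/
def IsSubcomodule (U : Submodule R V) : Prop :=
  ∀ u ∈ U, (coact u : V ⊗[R] C) ∈ range (U.subtype.rTensor C)

variable (C) in
/-- An irreducible subcomodule: it is nonzero, and its only subcomodules are `0` and itself. -/
structure IsIrreducibleSubcomodule (W : Submodule R V) : Prop where
  isSubcomodule : IsSubcomodule C W
  ne_bot : W ≠ ⊥
  eq_bot_or_eq : ∀ U ≤ W, IsSubcomodule C U → U = ⊥ ∨ U = W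

variable [Module.Free R C]

theorem isSubcomodule_iff {U : Submodule R V} :
    IsSubcomodule C U ↔ ∀ u ∈ U, ∀ f : DualAlgebra R C, f • u ∈ U := by
  simp only [IsSubcomodule, mem_range_rTensor_subtype_iff]
  exact forall₂_congr fun u _ ↦ WithConv.ofConv_surjective.forall

theorem isIrreducibleSubcomodule_restrictScalars (N : Submodule (DualAlgebra R C) V)
    [hN : IsSimpleModule (DualAlgebra R C) N] :
    IsIrreducibleSubcomodule C (N.restrictScalars R) where
  isSubcomodule := isSubcomodule_iff.2 fun _ hu f ↦ N.smul_mem f hu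
  ne_bot := (Submodule.restrictScalars_eq_bot_iff ..).not.2 (isSimpleModule_iff_isAtom.1 hN).1
  eq_bot_or_eq U hUN hU := by
    let U' : Submodule (DualAlgebra R C) V :=
      { U with smul_mem' := fun f u hu ↦ isSubcomodule_iff.1 hU u hu f }
    refine ((isSimpleModule_iff_isAtom.1 hN).le_iff.1 (show U' ≤ N from hUN)).imp ?_ ?_ <;>
    exact congrArg (Submodule.restrictScalars R)

theorem exists_isInternal_isIrreducibleSubcomodule [IsSemisimpleModule (DualAlgebra R C) V] :
    ∃ (κ : Type v) (_ : DecidableEq κ) (W : κ → Submodule R V),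
      DirectSum.IsInternal W ∧ ∀ i, IsIrreducibleSubcomodule C (W i) := by
  obtain ⟨S, hindep, hsup, hsimple⟩ :=
    IsSemisimpleModule.exists_sSupIndep_sSup_simples_eq_top (DualAlgebra R C) V
  classical
  have hS : DirectSum.IsInternal fun N : S ↦ (N : Submodule (DualAlgebra R C) V) :=
    DirectSum.isInternal_submodule_of_iSupIndep_of_iSup_eq_top ((sSupIndep_iff S).1 hindep)
      (sSup_eq_iSup' S ▸ hsup)
  -- `DirectSum.IsInternal` refers only to the additive structure, so `hS` also applies over `R`.
  refine ⟨S, inferInstance, fun N ↦ N.1.restrictScalars R, hS, fun N ↦ ?_⟩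
  have := hsimple N N.2
  exact isIrreducibleSubcomodule_restrictScalars N.1

end Subcomodule
end RightComodule

section Subcoalgebra

open RightComodule

variable {k C : Type*} [Field k] [AddCommGroup C] [Module k C] [Coalgebra k C]

/-- A subcoalgebra: a subspace `D` with `Δ D ⊆ D ⊗ D`. -/
def IsSubcoalgebra (D : Submodule k C) : Prop :=
  ∀ x ∈ D, Coalgebra.comul (R := k) x ∈ range (TensorProduct.map D.subtype D.subtype)

/-- A cosimple subcoalgebra. The zero subcoalgebra is allowed. -/
structure IsCosimple (D : Submodule k C) : Prop where
  isSubcoalgebra : IsSubcoalgebra D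
  eq_bot_or_eq : ∀ E ≤ D, IsSubcoalgebra E → E = ⊥ ∨ E = D

theorem isSubcoalgebra_iff {D : Submodule k C} :
    IsSubcoalgebra D ↔ (∀ x ∈ D, ∀ f : DualAlgebra k C, f • x ∈ D) ∧
      ∀ x ∈ D, ∀ ξ : Module.Dual k C, coefficientMap (C := C) ξ x ∈ D := by
  obtain ⟨p, hp⟩ := D.subtype.exists_leftInverse_of_injective D.ker_subtype
  simp only [IsSubcoalgebra, range_map_subtype_eq_inf D hp, Submodule.mem_inf, forall_and,
    mem_range_lTensor_subtype_iff]
  exact and_congr isSubcomodule_iff Iff.rfl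

theorem IsSubcoalgebra.inf_of_isFullyInvariant {D : Submodule k C} (hD : IsSubcoalgebra D)
    {N : Submodule (DualAlgebra k C) C} (hN : N.IsFullyInvariant) :
    IsSubcoalgebra (D ⊓ N.restrictScalars k) := by
  obtain ⟨hDsmul, hDcoeff⟩ := isSubcoalgebra_iff.1 hD
  exact isSubcoalgebra_iff.2
    ⟨fun x hx f ↦ ⟨hDsmul x hx.1 f, N.smul_mem f hx.2⟩,
      fun x hx ξ ↦ ⟨hDcoeff x hx.1 ξ, hN (coefficientMap ξ) hx.2⟩⟩

theorem IsCosimple.le_socle {D : Submodule k C} (hD : IsCosimple D) :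
    D ≤ (socle (DualAlgebra k C) C).restrictScalars k := by
  rcases hD.eq_bot_or_eq _ inf_le_left
    (hD.isSubcoalgebra.inf_of_isFullyInvariant socle_isFullyInvariant) with hbot | heq
  · let D' : Submodule (DualAlgebra k C) C :=
      { D with smul_mem' := fun f x hx ↦ (isSubcoalgebra_iff.1 hD.isSubcoalgebra).1 x hx f }
    have hD' : D' = ⊥ := eq_bot_of_disjoint_socle <| disjoint_iff.2 <|
      Submodule.restrictScalars_injective k _ _ hbot
    exact (congrArg (Submodule.restrictScalars k) hD').trans_le bot_le
  · exact inf_eq_left.1 heq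

theorem isSemisimpleModule_of_iSup_isCosimple {ι : Type*} {D : ι → Submodule k C}
    (hD : ∀ i, IsCosimple (D i)) (htop : ⨆ i, D i = ⊤) :
    IsSemisimpleModule (DualAlgebra k C) C := by
  rw [isSemisimpleModule_iff_socle_eq_top, ← Submodule.restrictScalars_eq_top_iff k, eq_top_iff,
    ← htop]
  exact iSup_le fun i ↦ (hD i).le_socle

end Subcoalgebra

theorem cosemisimple_comodule_direct_sum_of_irreducibles_general
    {k C ι : Type*} {V : Type v} [Field k] [AddCommGroup C] [Module k C] [Coalgebra k C]
    (D : ι → Submodule k C) (htop : ⨆ i, D i = ⊤) (hD : ∀ i, IsCosimple (D i))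
    [AddCommGroup V] [Module k V] [RightComodule k C V] :
    ∃ (κ : Type v) (_ : DecidableEq κ) (W : κ → Submodule k V), DirectSum.IsInternal W ∧
      ∀ i, RightComodule.IsIrreducibleSubcomodule C (W i) := by
  have : IsSemisimpleModule (DualAlgebra k C) C := isSemisimpleModule_of_iSup_isCosimple hD htop
  have : IsSemisimpleModule (DualAlgebra k C) V :=
    RightComodule.isSemisimpleModule_of_isSemisimpleModule_self
  exact RightComodule.exists_isInternal_isIrreducibleSubcomodule

/-- Let `C` be a cosemisimple coalgebra over a field `k`, i.e.
`C` is the internal direct sum of a family `D` of subcoalgebras each of which is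
cosimple.  Then every finite-dimensional right `C`-comodule `V` is the internal
direct sum of finitely many irreducible subcomodules. -/
theorem cosemisimple_comodule_direct_sum_of_irreducibles
    {k C : Type*} [Field k] [AddCommGroup C] [Module k C] [Coalgebra k C]
    {ι : Type*} [DecidableEq ι] (D : ι → Submodule k C)
    (hinternal : DirectSum.IsInternal D)
    (hsubcoalg : ∀ i, ∀ x ∈ D i, Coalgebra.comul (R := k) x ∈
      LinearMap.range (TensorProduct.map (D i).subtype (D i).subtype))
    (hcosimple : ∀ i, ∀ E : Submodule k C, E ≤ D i →
      (∀ x ∈ E, Coalgebra.comul (R := k) x ∈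
        LinearMap.range (TensorProduct.map E.subtype E.subtype)) →
      E = ⊥ ∨ E = D i)
    {V : Type*} [AddCommGroup V] [Module k V] [FiniteDimensional k V]
    (β : V →ₗ[k] V ⊗[k] C)
    (hβ1 : ∀ v : V,
      TensorProduct.rid k V
        ((LinearMap.lTensor V (Coalgebra.counit (R := k) (A := C))) (β v)) = v)
    (hβ2 : ∀ v : V,
      (TensorProduct.assoc k V C C) ((LinearMap.rTensor C β) (β v)) =
        (LinearMap.lTensor V (Coalgebra.comul (R := k) (A := C))) (β v)) :
    ∃ (n : ℕ) (W : Fin n → Submodule k V),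
      DirectSum.IsInternal W ∧
      ∀ i : Fin n,
        (∀ w ∈ W i, β w ∈ LinearMap.range (LinearMap.rTensor C (W i).subtype)) ∧
        W i ≠ ⊥ ∧
        (∀ U : Submodule k V, U ≤ W i →
          (∀ u ∈ U, β u ∈ LinearMap.range (LinearMap.rTensor C U.subtype)) →
          U = ⊥ ∨ U = W i) := by
  let _ : RightComodule k C V := ⟨β, hβ1, hβ2⟩
  obtain ⟨κ, _, W, hW, hirr⟩ := cosemisimple_comodule_direct_sum_of_irreducibles_general (V := V) D
    hinternal.submodule_iSup_eq_top fun i ↦ ⟨hsubcoalg i, hcosimple i⟩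
  obtain ⟨n, e, he⟩ := exists_fin_equiv_isInternal hW fun i ↦ (hirr i).ne_bot
  exact ⟨n, fun i ↦ W (e i), he, fun i ↦
    ⟨(hirr (e i)).isSubcomodule, (hirr (e i)).ne_bot, (hirr (e i)).eq_bot_or_eq⟩⟩
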